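/- Assume a = 0. Then there exist linear forms L_1, L_2 ∈ S_1 such that Q = L_1 L_2 if and only if D7 = 0, where D7 = (μ_{23}cd² − 2def + be²)(μ_{13}μ_{21}cd² − 2def + μ_{12}μ_{23}μ_{31}be²). -/

import Mathlib

noncomputable section

/-- The skew-commutation relation `z_j z_i = μ_{ij} z_i z_j` on the free algebra. -/
inductive SkewRel (k : Type*) [Field k] (μ : Fin 3 → Fin 3 → k) :
    FreeAlgebra k (Fin 3) → FreeAlgebra k (Fin 3) → Prop
  | rel (i j : Fin 3) :
      SkewRel k μ (FreeAlgebra.ι k j * FreeAlgebra.ι k i)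
        (μ i j • (FreeAlgebra.ι k i * FreeAlgebra.ι k j))

/-- The generators `z_1, z_2, z_3` of `S = k⟨z_1,z_2,z_3⟩/(z_j z_i - μ_{ij} z_i z_j)`. -/
def z (k : Type*) [Field k] (μ : Fin 3 → Fin 3 → k) (i : Fin 3) :
    RingQuot (SkewRel k μ) :=
  RingQuot.mkAlgHom k (SkewRel k μ) (FreeAlgebra.ι k i)

/-- The representation of the skew polynomial algebra by strictly upper triangular matrices. -/
theorem skew_eval (k : Type*) [Field k] (μ : Fin 3 → Fin 3 → k) (α β : Fin 3 → k)
    (h : ∀ i j, α j * β i = μ i j * (α i * β j)) :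
    ∃ φ : RingQuot (SkewRel k μ) →ₐ[k] Matrix (Fin 3) (Fin 3) k,
      ∀ i, φ (z k μ i) = !![0, α i, 0; 0, 0, β i; 0, 0, 0] := by
  refine ⟨RingQuot.liftAlgHom k ⟨FreeAlgebra.lift k
    (fun i => !![0, α i, 0; 0, 0, β i; 0, 0, 0]), ?_⟩, ?_⟩
  · rintro _ _ ⟨i, j⟩
    simp only [map_mul, map_smul, FreeAlgebra.lift_ι_apply]
    ext r s
    fin_cases r <;> fin_cases s <;> simp [Matrix.mul_apply, Fin.sum_univ_three, h i j]
  · intro i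
    simp [z]

theorem skew_coeff (k : Type*) [Field k] (μ : Fin 3 → Fin 3 → k) (α β : Fin 3 → k)
    (h : ∀ i j, α j * β i = μ i j * (α i * β j)) (a b c d e f p0 p1 p2 q0 q1 q2 : k)
    (H : a • (z k μ 0 * z k μ 0) + b • (z k μ 1 * z k μ 1) + c • (z k μ 2 * z k μ 2) +
      (2 * d) • (z k μ 0 * z k μ 1) + (2 * e) • (z k μ 0 * z k μ 2) +
      (2 * f) • (z k μ 1 * z k μ 2) =
      (p0 • z k μ 0 + p1 • z k μ 1 + p2 • z k μ 2) *
      (q0 • z k μ 0 + q1 • z k μ 1 + q2 • z k μ 2)) :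
    a * (α 0 * β 0) + b * (α 1 * β 1) + c * (α 2 * β 2) + 2 * d * (α 0 * β 1)
      + 2 * e * (α 0 * β 2) + 2 * f * (α 1 * β 2) =
    (p0 * α 0 + p1 * α 1 + p2 * α 2) * (q0 * β 0 + q1 * β 1 + q2 * β 2) := by
  obtain ⟨φ, hφ⟩ := skew_eval k μ α β h
  have := congrFun (congrFun (congrArg φ H) 0) 2
  simp only [map_add, map_mul, map_smul, hφ] at this
  simpa [Matrix.mul_apply, Fin.sum_univ_three] using this

theorem z_swap (k : Type*) [Field k] (μ : Fin 3 → Fin 3 → k) (i j : Fin 3) :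
    z k μ j * z k μ i = μ i j • (z k μ i * z k μ j) := by
  have := RingQuot.mkAlgHom_rel k (SkewRel.rel (k := k) (μ := μ) i j)
  simpa [z] using this

theorem skew_prod (k : Type*) [Field k] (μ : Fin 3 → Fin 3 → k) (p0 p1 p2 q0 q1 q2 : k) :
    (p0 • z k μ 0 + p1 • z k μ 1 + p2 • z k μ 2) *
      (q0 • z k μ 0 + q1 • z k μ 1 + q2 • z k μ 2) =
    (p0 * q0) • (z k μ 0 * z k μ 0) + (p1 * q1) • (z k μ 1 * z k μ 1)
      + (p2 * q2) • (z k μ 2 * z k μ 2) +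
      (p0 * q1 + μ 0 1 * p1 * q0) • (z k μ 0 * z k μ 1)
      + (p0 * q2 + μ 0 2 * p2 * q0) • (z k μ 0 * z k μ 2) +
      (p1 * q2 + μ 1 2 * p2 * q1) • (z k μ 1 * z k μ 2) := by
  simp only [add_mul, mul_add, smul_mul_smul_comm]
  rw [z_swap k μ 0 1, z_swap k μ 0 2, z_swap k μ 1 2]
  module

/-- Factorization amounts to solving six scalar equations. -/
theorem skew_factor_iff (k : Type*) [Field k]
    (μ : Fin 3 → Fin 3 → k) (hμdiag : ∀ i, μ i i = 1)
    (hμ : ∀ i j, μ i j * μ j i = 1) (a b c d e f : k) :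
    (∃ L1 ∈ (Submodule.span k ({z k μ 0, z k μ 1, z k μ 2} : Set (RingQuot (SkewRel k μ)))),
      ∃ L2 ∈ (Submodule.span k ({z k μ 0, z k μ 1, z k μ 2} : Set (RingQuot (SkewRel k μ)))),
        (a • (z k μ 0 * z k μ 0) + b • (z k μ 1 * z k μ 1) + c • (z k μ 2 * z k μ 2) +
      (2 * d) • (z k μ 0 * z k μ 1) + (2 * e) • (z k μ 0 * z k μ 2) +
      (2 * f) • (z k μ 1 * z k μ 2)) = L1 * L2) ↔
    ∃ p0 p1 p2 q0 q1 q2 : k, p0 * q0 = a ∧ p1 * q1 = b ∧ p2 * q2 = c ∧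
      p0 * q1 + μ 0 1 * p1 * q0 = 2 * d ∧ p0 * q2 + μ 0 2 * p2 * q0 = 2 * e ∧
      p1 * q2 + μ 1 2 * p2 * q1 = 2 * f := by
  constructor
  · rintro ⟨L1, h1, L2, h2, H⟩
    rw [Submodule.mem_span_triple] at h1 h2
    obtain ⟨p0, p1, p2, rfl⟩ := h1
    obtain ⟨q0, q1, q2, rfl⟩ := h2
    have key := fun α β h => skew_coeff k μ α β h a b c d e f p0 p1 p2 q0 q1 q2 H
    have e0 := key ![1, 0, 0] ![1, 0, 0] (by
      intro i j; fin_cases i <;> fin_cases j <;> simp [hμdiag])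
    have e1 := key ![0, 1, 0] ![0, 1, 0] (by
      intro i j; fin_cases i <;> fin_cases j <;> simp [hμdiag])
    have e2 := key ![0, 0, 1] ![0, 0, 1] (by
      intro i j; fin_cases i <;> fin_cases j <;> simp [hμdiag])
    have e01 := key ![1, 1, 0] ![μ 0 1, 1, 0] (by
      intro i j; fin_cases i <;> fin_cases j <;> simp [hμdiag, hμ])
    have e02 := key ![1, 0, 1] ![μ 0 2, 0, 1] (by
      intro i j; fin_cases i <;> fin_cases j <;> simp [hμdiag, hμ])
    have e12 := key ![0, 1, 1] ![0, μ 1 2, 1] (by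
      intro i j; fin_cases i <;> fin_cases j <;> simp [hμdiag, hμ])
    simp at e0 e1 e2 e01 e02 e12
    refine ⟨p0, p1, p2, q0, q1, q2, e0.symm, e1.symm, e2.symm, ?_, ?_, ?_⟩
    · linear_combination -e01 + μ 0 1 * e0 + e1
    · linear_combination -e02 + μ 0 2 * e0 + e2
    · linear_combination -e12 + μ 1 2 * e1 + e2
  · rintro ⟨p0, p1, p2, q0, q1, q2, h1, h2, h3, h4, h5, h6⟩
    refine ⟨p0 • z k μ 0 + p1 • z k μ 1 + p2 • z k μ 2,
      Submodule.mem_span_triple.2 ⟨p0, p1, p2, rfl⟩,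
      q0 • z k μ 0 + q1 • z k μ 1 + q2 • z k μ 2,
      Submodule.mem_span_triple.2 ⟨q0, q1, q2, rfl⟩, ?_⟩
    rw [skew_prod, h1, h2, h3, h4, h5, h6]

theorem quad_root (k : Type*) [Field k] [IsAlgClosed k] (A B C : k) (hA : A ≠ 0) :
    ∃ s : k, A * s ^ 2 + B * s + C = 0 := by
  obtain ⟨s, hs⟩ := IsAlgClosed.exists_root
    (Polynomial.C A * Polynomial.X ^ 2 + Polynomial.C B * Polynomial.X + Polynomial.C C)
    (by rw [Polynomial.degree_quadratic hA]; decide)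
  exact ⟨s, by simpa [Polynomial.IsRoot] using hs⟩

/-- The system `2d x = b`, `2e y = c`, `e x + m d y = f`, solvable away from `d = e = 0`. -/
theorem lin_solve (k : Type*) [Field k] (h2 : (2 : k) ≠ 0) (b c d e f m n : k)
    (hm : m ≠ 0) (hn : n ≠ 0) (hde : ¬ (d = 0 ∧ e = 0))
    (h : m * c * d ^ 2 - 2 * d * e * f + n * b * e ^ 2 = 0) :
    ∃ x y : k, 2 * d * x = b ∧ 2 * e * y = c ∧ n * e * x + m * d * y = f := by
  by_cases hd : d = 0
  · have he : e ≠ 0 := fun he => hde ⟨hd, he⟩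
    subst hd
    have hb : b = 0 := by simpa [hn, he] using h
    refine ⟨f / (n * e), c / (2 * e), by simp [hb], by field_simp, by field_simp; ring⟩
  · by_cases he : e = 0
    · subst he
      have hc : c = 0 := by simpa [hm, hd] using h
      refine ⟨b / (2 * d), f / (m * d), by field_simp, by simp [hc], by field_simp; ring⟩
    · refine ⟨b / (2 * d), c / (2 * e), by field_simp, by field_simp, ?_⟩
      field_simp
      linear_combination h

theorem stmt12 (k : Type*) [Field k] [IsAlgClosed k] (h2 : (2 : k) ≠ 0)
    (μ : Fin 3 → Fin 3 → k) (hμdiag : ∀ i, μ i i = 1)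
    (hμ : ∀ i j, μ i j * μ j i = 1)
    (a b c d e f : k)
    (ha : a = 0) :
    (∃ L1 ∈ (Submodule.span k ({z k μ 0, z k μ 1, z k μ 2} : Set (RingQuot (SkewRel k μ)))),
      ∃ L2 ∈ (Submodule.span k ({z k μ 0, z k μ 1, z k μ 2} : Set (RingQuot (SkewRel k μ)))),
        (a • (z k μ 0 * z k μ 0) + b • (z k μ 1 * z k μ 1) + c • (z k μ 2 * z k μ 2) +
      (2 * d) • (z k μ 0 * z k μ 1) + (2 * e) • (z k μ 0 * z k μ 2) +
      (2 * f) • (z k μ 1 * z k μ 2)) = L1 * L2) ↔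
      ((μ 1 2 * c * d ^ 2 - 2 * d * e * f + b * e ^ 2) * (μ 0 2 * μ 1 0 * c * d ^ 2 - 2 * d * e * f + μ 0 1 * μ 1 2 * μ 2 0 * b * e ^ 2)) = 0 := by
  subst ha
  rw [skew_factor_iff k μ hμdiag hμ]
  have n01 : μ 0 1 ≠ 0 := left_ne_zero_of_mul_eq_one (hμ 0 1)
  have n02 : μ 0 2 ≠ 0 := left_ne_zero_of_mul_eq_one (hμ 0 2)
  have n12 : μ 1 2 ≠ 0 := left_ne_zero_of_mul_eq_one (hμ 1 2)
  have i10 : μ 1 0 = (μ 0 1)⁻¹ := eq_inv_of_mul_eq_one_right (hμ 0 1)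
  have i20 : μ 2 0 = (μ 0 2)⁻¹ := eq_inv_of_mul_eq_one_right (hμ 0 2)
  rw [i10, i20]
  generalize μ 0 1 = r at *
  generalize μ 0 2 = s at *
  generalize μ 1 2 = t at *
  constructor
  · rintro ⟨p0, p1, p2, q0, q1, q2, h0, h1, h2', h3, h4, h5⟩
    rcases mul_eq_zero.1 h0 with rfl | rfl
    · have hd : d = r * p1 * q0 / 2 := by field_simp; linear_combination -h3
      have he : e = s * p2 * q0 / 2 := by field_simp; linear_combination -h4
      have hf : f = (p1 * q2 + t * p2 * q1) / 2 := by field_simp; linear_combination -h5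
      refine mul_eq_zero_of_right _ ?_
      rw [hd, he, hf, ← h1, ← h2']
      field_simp
      ring
    · have hd : d = p0 * q1 / 2 := by field_simp; linear_combination -h3
      have he : e = p0 * q2 / 2 := by field_simp; linear_combination -h4
      have hf : f = (p1 * q2 + t * p2 * q1) / 2 := by field_simp; linear_combination -h5
      refine mul_eq_zero_of_left ?_ _
      rw [hd, he, hf, ← h1, ← h2']
      field_simp
      ring
  · intro h
    by_cases hde : d = 0 ∧ e = 0
    · obtain ⟨rfl, rfl⟩ := hde
      by_cases hb : b = 0
      · subst hb
        exact ⟨0, 2 * f, c, 0, 0, 1, by simp, by simp, by simp, by simp, by simp, by simp⟩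
      · obtain ⟨x, hx⟩ := quad_root k (t * b) (-2 * f) c (mul_ne_zero n12 hb)
        refine ⟨0, 1, x, 0, b, 2 * f - t * x * b, by simp, by simp, ?_, by simp, by simp, by ring⟩
        linear_combination -hx
    rcases mul_eq_zero.1 h with h | h
    · obtain ⟨x, y, h1, h3, h4⟩ := lin_solve k h2 b c d e f t 1 n12 one_ne_zero hde
        (by linear_combination h)
      refine ⟨1, x, y, 0, 2 * d, 2 * e, by simp, ?_, ?_, by simp, by simp, ?_⟩
      · linear_combination h1
      · linear_combination h3
      · linear_combination 2 * h4
    · obtain ⟨x, y, h1, h3, h4⟩ := lin_solve k h2 b c d e f (s * r⁻¹) (r * t * s⁻¹)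
        (by simp [n01, n02]) (by simp [n01, n02, n12]) hde h
      refine ⟨0, 2 * d / r, 2 * e / s, 1, r * x, s * y, by simp, ?_, ?_, ?_, ?_, ?_⟩
      · rw [← h1]; field_simp
      · rw [← h3]; field_simp
      · field_simp; ring
      · field_simp; ring
      · rw [← h4]; field_simp; ring
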